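/- Let n ≥ 3 be an odd integer and let j ≥ 1 be an integer. Then for each positive odd integer k, (1, (n^j - 1)^{nk}, (n^j - 1)^{nk} + 1) is an abc triple. Also, if n is a positive even integer, then (1, n^{(n+1)k}, n^{(n+1)k} + 1) is an abc triple for each positive odd integer k. -/

import Mathlib

open scoped Classical

/-- The radical of a natural number: the product of its distinct prime factors. -/
def rad (n : ℕ) : ℕ := ∏ p ∈ n.primeFactors, p

/-- The cosocle of a natural number: `n / rad n`. -/
def cosocle (n : ℕ) : ℕ := n / rad n

/-- `(a, b, c)` is an abc triple: `a, b, c` are relatively prime positive integers with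
`a + b = c` and `rad (a*b*c) < c`. -/
def IsABCTriple (a b c : ℕ) : Prop :=
  0 < a ∧ 0 < b ∧ 0 < c ∧ a + b = c ∧
    Nat.Coprime a b ∧ Nat.Coprime a c ∧ Nat.Coprime b c ∧ rad (a * b * c) < c

/-!
Let `r = rad (m + 1)` and let `e` be an odd multiple of `r`. Since `m ≡ -1` modulo `r`, each of the
`e` terms of the cofactor `1 - m + ⋯ + m ^ (e - 1)` of `m + 1` in `c = m ^ e + 1` is `1` modulo `r`,
so the cofactor is divisible by `r`. Thus `(m + 1) * r` divides `c`, and dividing `c` by `m + 1`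
does not lose a prime: `(m + 1) * rad c ≤ c`. As `m ^ e` contributes at most `m` to the radical,
`(1, m ^ e, c)` is an abc triple. Both families are of this form, with `m + 1` equal to `n ^ j` and
to `n + 1`.
-/

open UniqueFactorizationMonoid

theorem rad_eq_radical (n : ℕ) : rad n = radical n :=
  Nat.radical_eq_prod_primeFactors.symm

theorem rad_pos (n : ℕ) : 0 < rad n :=
  rad_eq_radical n ▸ Nat.radical_pos n

theorem rad_dvd_self (n : ℕ) : rad n ∣ n :=
  rad_eq_radical n ▸ radical_dvd_self

theorem rad_pow_dvd (n j : ℕ) : rad (n ^ j) ∣ n := by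
  rw [rad_eq_radical]
  exact radical_pow_dvd.trans radical_dvd_self

theorem rad_mul_le (a b : ℕ) : rad (a * b) ≤ rad a * rad b := by
  have hpos : 0 < rad a * rad b := Nat.mul_pos (rad_pos a) (rad_pos b)
  simp only [rad_eq_radical] at hpos ⊢
  exact Nat.le_of_dvd hpos radical_mul_dvd

theorem rad_mul_eq_of_rad_dvd {d s : ℕ} (hd : d ≠ 0) (hs : s ≠ 0) (h : rad d ∣ s) :
    rad (d * s) = rad s := by
  have hsub : d.primeFactors ⊆ s.primeFactors := by
    rwa [rad_eq_radical, Nat.radical_dvd_iff hs] at h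
  simp only [rad, Nat.primeFactors_mul hd hs, Finset.union_eq_right.mpr hsub]

theorem mul_rad_le_of_mul_rad_dvd {d c : ℕ} (hc : 0 < c) (h : d * rad d ∣ c) :
    d * rad c ≤ c := by
  obtain ⟨s, rfl⟩ := dvd_of_mul_right_dvd h
  have hd : 0 < d := Nat.pos_of_mul_pos_right hc
  have hs : 0 < s := Nat.pos_of_mul_pos_left hc
  have hrad : rad d ∣ s := Nat.dvd_of_mul_dvd_mul_left hd h
  rw [rad_mul_eq_of_rad_dvd hd.ne' hs.ne' hrad]
  exact Nat.mul_le_mul_left d (Nat.le_of_dvd hs (rad_dvd_self s))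

theorem add_mul_dvd_pow_add_pow {R : Type*} [CommRing R] {x y p : R} {e : ℕ} (he : Odd e)
    (hxy : p ∣ x + y) (hpe : p ∣ (e : R)) : (x + y) * p ∣ x ^ e + y ^ e := by
  have hpow : x ^ e + y ^ e = x ^ e - (-y) ^ e := by rw [he.neg_pow, sub_neg_eq_add]
  rw [← sub_neg_eq_add x y] at hxy ⊢
  rw [hpow, ← (Commute.all x (-y)).mul_geom_sum₂]
  exact mul_dvd_mul_left _ ((dvd_geom_sum₂_iff_of_dvd_sub hxy).mpr (hpe.mul_right _))

theorem add_one_mul_dvd_pow_add_one {m r e : ℕ} (he : Odd e) (hm : r ∣ m + 1) (hre : r ∣ e) :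
    (m + 1) * r ∣ m ^ e + 1 := by
  have hm' : (r : ℤ) ∣ m + 1 := mod_cast hm
  have hdvd : ((m : ℤ) + 1) * r ∣ m ^ e + 1 ^ e :=
    add_mul_dvd_pow_add_pow he hm' (Int.natCast_dvd_natCast.mpr hre)
  rw [one_pow] at hdvd
  exact_mod_cast hdvd

theorem isABCTriple_one_pow_of_mul_rad_dvd {m e : ℕ} (hm : 0 < m)
    (hdvd : (m + 1) * rad (m + 1) ∣ m ^ e + 1) : IsABCTriple 1 (m ^ e) (m ^ e + 1) := by
  refine ⟨one_pos, pow_pos hm e, Nat.succ_pos _, add_comm _ _, by simp, by simp, by simp, ?_⟩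
  calc rad (1 * m ^ e * (m ^ e + 1))
      ≤ rad (m ^ e) * rad (m ^ e + 1) := by rw [one_mul]; exact rad_mul_le _ _
    _ ≤ m * rad (m ^ e + 1) := Nat.mul_le_mul_right _ (Nat.le_of_dvd hm (rad_pow_dvd m e))
    _ < (m + 1) * rad (m ^ e + 1) := Nat.mul_lt_mul_of_pos_right m.lt_succ_self (rad_pos _)
    _ ≤ m ^ e + 1 := mul_rad_le_of_mul_rad_dvd (Nat.succ_pos _) hdvd

theorem isABCTriple_one_pow_of_rad_dvd {m e : ℕ} (hm : 0 < m) (he : Odd e)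
    (hrad : rad (m + 1) ∣ e) : IsABCTriple 1 (m ^ e) (m ^ e + 1) :=
  isABCTriple_one_pow_of_mul_rad_dvd hm (add_one_mul_dvd_pow_add_one he (rad_dvd_self _) hrad)

theorem stmt_19 :
    (∀ n j k : ℕ, 3 ≤ n → Odd n → 1 ≤ j → 0 < k → Odd k →
      IsABCTriple 1 ((n ^ j - 1) ^ (n * k)) ((n ^ j - 1) ^ (n * k) + 1)) ∧
    (∀ n k : ℕ, 0 < n → Even n → 0 < k → Odd k →
      IsABCTriple 1 (n ^ ((n + 1) * k)) (n ^ ((n + 1) * k) + 1)) := by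
  constructor
  · intro n j k hn hodd hj _ hk
    have hpow : 1 < n ^ j := Nat.one_lt_pow (Nat.one_le_iff_ne_zero.mp hj) (by lia)
    have hrad : rad (n ^ j - 1 + 1) ∣ n := by
      rw [Nat.sub_add_cancel hpow.le]
      exact rad_pow_dvd n j
    exact isABCTriple_one_pow_of_rad_dvd (Nat.sub_pos_of_lt hpow) (hodd.mul hk)
      (hrad.mul_right k)
  · intro n k hn heven _ hk
    exact isABCTriple_one_pow_of_rad_dvd hn (heven.add_one.mul hk)
      ((rad_dvd_self (n + 1)).mul_right k)
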